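/- arXiv:math/0408204 — 2 statements merged into one kernel-verified Lean document; each statement's English description precedes it below -/
import Mathlib

section
/- Let n ≥ 1 and let x_i, a_i, b_i, c_i, d_i (1≤i≤2n) be variables and t an indeterminate. Then Pf[ (a_i b_j − a_j b_i)(c_i d_j − c_j d_i) / ((x_i − x_j)(1 − t x_i x_j)) ]_{1≤i<j≤2n} = V^n(X, 1+tX^2; A, B) · V^n(X, 1+tX^2; C, D) / Π_{1≤i<j≤2n}(x_i − x_j)(1 − t x_i x_j). -/
open Finset

def pfMatchings (n : ℕ) : Finset (Equiv.Perm (Fin (2 * n))) :=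
  Finset.univ.filter (fun σ =>
    (∀ i : Fin n, σ ⟨2 * i.1, by have := i.2; omega⟩ < σ ⟨2 * i.1 + 1, by have := i.2; omega⟩) ∧
    (∀ i j : Fin n, i < j →
      σ ⟨2 * i.1, by have := i.2; omega⟩ < σ ⟨2 * j.1, by have := j.2; omega⟩))

def pf {R : Type*} [CommRing R] {n : ℕ} (A : Matrix (Fin (2 * n)) (Fin (2 * n)) R) : R :=
  ∑ σ ∈ pfMatchings n,
    ((Equiv.Perm.sign σ : ℤ) : R) *
      ∏ i : Fin n,
        A (σ ⟨2 * i.1, by have := i.2; omega⟩) (σ ⟨2 * i.1 + 1, by have := i.2; omega⟩)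

/-- `V^n(X,Y;A,B)`: the determinant of the `2n × 2n` matrix whose `(i,j)` entry
(0-indexed columns) is `a_i x_i^{n−1−j} y_i^j` for `j < n` and
`b_i x_i^{2n−1−j} y_i^{j−n}` for `n ≤ j < 2n`. -/
def Vdet {R : Type*} [CommRing R] (n : ℕ) (x y a b : Fin (2 * n) → R) : R :=
  Matrix.det (Matrix.of fun i j : Fin (2 * n) =>
    if (j : ℕ) < n then a i * x i ^ (n - 1 - (j : ℕ)) * y i ^ (j : ℕ)
    else b i * x i ^ (2 * n - 1 - (j : ℕ)) * y i ^ ((j : ℕ) - n))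
def pfExt {n : ℕ} (j : Fin (2*n+1)) (τ : Equiv.Perm (Fin (2*n))) :
    Equiv.Perm (Fin (2*(n+1))) :=
  Equiv.Perm.decomposeFin.symm ((0 : Fin (2*n+1+1)),
    (j.cycleRange.symm * Equiv.Perm.decomposeFin.symm ((0 : Fin (2*n+1)), τ) :
      Equiv.Perm (Fin (2*n+1))))

lemma pfExt_zero {n : ℕ} (j : Fin (2*n+1)) (τ : Equiv.Perm (Fin (2*n))) (h) :
    pfExt j τ ⟨0, h⟩ = (0 : Fin (2*n+1+1)) :=
  Equiv.Perm.decomposeFin_symm_apply_zero _ _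

lemma pfExt_one {n : ℕ} (j : Fin (2*n+1)) (τ : Equiv.Perm (Fin (2*n))) (h) :
    pfExt j τ ⟨1, h⟩ = (j.succ : Fin (2*n+1+1)) := by
  have : (⟨1, h⟩ : Fin (2*(n+1))) = (Fin.succ (0 : Fin (2*n+1)) : Fin (2*n+1+1)) := rfl
  rw [this]
  refine (Equiv.Perm.decomposeFin_symm_apply_succ _ _ _).trans ?_
  simp

lemma pfExt_succ {n : ℕ} (j : Fin (2*n+1)) (τ : Equiv.Perm (Fin (2*n))) (i : Fin (2*n)) (h) :
    pfExt j τ ⟨i.1 + 2, h⟩ = ((j.succAbove (τ i)).succ : Fin (2*n+1+1)) := by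
  have : (⟨i.1+2, h⟩ : Fin (2*(n+1))) = (Fin.succ (Fin.succ i : Fin (2*n+1)) : Fin (2*n+1+1)) := rfl
  rw [this]
  refine (Equiv.Perm.decomposeFin_symm_apply_succ _ _ _).trans ?_
  simp

lemma pfExt_sign {n : ℕ} (j : Fin (2*n+1)) (τ : Equiv.Perm (Fin (2*n))) :
    Equiv.Perm.sign (pfExt j τ) = (-1) ^ (j : ℕ) * Equiv.Perm.sign τ := by
  refine (Equiv.Perm.decomposeFin.symm_sign _ _).trans ?_
  simp [Equiv.Perm.decomposeFin.symm_sign, Fin.sign_cycleRange]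

lemma pfExt_inj {n : ℕ} {j j' : Fin (2*n+1)} {τ τ' : Equiv.Perm (Fin (2*n))}
    (h : pfExt j τ = pfExt j' τ') : j = j' ∧ τ = τ' := by
  have h1 := congrArg (fun s => s ⟨1, by omega⟩) h
  simp only [pfExt_one] at h1
  have h1 := Fin.succ_injective _ h1
  subst h1
  refine ⟨rfl, ?_⟩
  ext i : 1
  have h2 := congrArg (fun s => s ⟨i.1+2, by omega⟩) h
  simp only [pfExt_succ] at h2
  exact Fin.succAbove_right_injective (Fin.succ_injective _ h2)

lemma pfExt_surj {n : ℕ} (σ : Equiv.Perm (Fin (2*(n+1)))) (h0 : σ ⟨0, by omega⟩ = (0 : Fin (2*n+1+1))) :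
    ∃ j τ, σ = pfExt j τ := by
  obtain ⟨⟨p, ρ⟩, hρ⟩ := (Equiv.Perm.decomposeFin (n := 2*n+1)).symm.surjective σ
  have hp : p = 0 := by
    rw [← h0, ← hρ]
    exact (Equiv.Perm.decomposeFin_symm_apply_zero _ _).symm
  subst hp
  obtain ⟨⟨q, τ⟩, hτ⟩ := (Equiv.Perm.decomposeFin (n := 2*n)).symm.surjective
    ((ρ 0).cycleRange * ρ)
  have hq : q = 0 := by
    rw [← Equiv.Perm.decomposeFin_symm_apply_zero q τ, hτ]
    simp
  subst hq
  refine ⟨ρ 0, τ, ?_⟩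
  rw [← hρ]
  unfold pfExt
  rw [hτ]
  congr 2
  ext i
  simp

lemma pfExt_mem {n : ℕ} (j : Fin (2*n+1)) (τ : Equiv.Perm (Fin (2*n))) :
    pfExt j τ ∈ pfMatchings (n+1) ↔ τ ∈ pfMatchings n := by
  simp only [pfMatchings, mem_filter, mem_univ, true_and]
  have e0 : ∀ i : Fin n, ∀ h, pfExt j τ ⟨2 * (i.succ).1, h⟩ =
      ((j.succAbove (τ ⟨2*i.1, by omega⟩)).succ : Fin (2*n+1+1)) := fun i h =>
    pfExt_succ j τ ⟨2*i.1, by omega⟩ h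
  have e1 : ∀ i : Fin n, ∀ h, pfExt j τ ⟨2 * (i.succ).1+1, h⟩ =
      ((j.succAbove (τ ⟨2*i.1+1, by omega⟩)).succ : Fin (2*n+1+1)) := fun i h =>
    pfExt_succ j τ ⟨2*i.1+1, by omega⟩ h
  have lt : ∀ u v : Fin (2*n), @LT.lt (Fin (2*(n+1))) _ ((j.succAbove u).succ : Fin (2*n+1+1)) ((j.succAbove v).succ : Fin (2*n+1+1)) ↔ u < v := by
    intro u v
    refine (Fin.succ_lt_succ_iff).trans ?_
    exact (Fin.strictMono_succAbove j).lt_iff_lt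
  constructor
  · rintro ⟨h1, h2⟩
    refine ⟨fun i => ?_, fun i k hik => ?_⟩
    · have := h1 i.succ
      rw [e0, e1, lt] at this
      exact this
    · have := h2 i.succ k.succ (Fin.succ_lt_succ_iff.2 hik)
      rw [e0, e0, lt] at this
      exact this
  · rintro ⟨h1, h2⟩
    refine ⟨fun i => ?_, fun i k hik => ?_⟩
    · refine Fin.cases ?_ (fun i => ?_) i
      · refine (pfExt_zero j τ _).trans_lt ((Fin.succ_pos j).trans_eq (pfExt_one j τ _).symm)
      · rw [e0, e1, lt]; exact h1 i
    · revert hik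
      refine Fin.cases ?_ (fun k => ?_) k
      · intro h; exact absurd h (Fin.not_lt_zero _)
      · refine Fin.cases ?_ (fun i => ?_) i
        · intro _
          rw [e0]
          exact (pfExt_zero j τ _).trans_lt (Fin.succ_pos _)
        · intro h
          rw [e0, e0, lt]
          exact h2 i k (Fin.succ_lt_succ_iff.1 h)

lemma pfMatchings_zero {n : ℕ} (σ : Equiv.Perm (Fin (2*(n+1)))) (h : σ ∈ pfMatchings (n+1)) :
    σ ⟨0, by omega⟩ = (0 : Fin (2*n+1+1)) := by
  simp only [pfMatchings, mem_filter, mem_univ, true_and] at h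
  obtain ⟨h1, h2⟩ := h
  obtain ⟨⟨k, hk⟩, hk0⟩ := σ.surjective (0 : Fin (2*n+1+1))
  rcases Nat.even_or_odd' k with ⟨c, rfl | rfl⟩
  · by_cases hc : c = 0
    · subst hc; exact hk0
    · have := h2 0 ⟨c, by omega⟩ (Fin.pos_iff_ne_zero.2 (by intro h; exact hc (congrArg Fin.val h)))
      rw [hk0] at this
      exact absurd (Fin.lt_def.1 this) (Nat.not_lt_zero _)
  · have := h1 ⟨c, by omega⟩
    rw [hk0] at this
    exact absurd (Fin.lt_def.1 this) (Nat.not_lt_zero _)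

lemma pf_succ {R : Type*} [CommRing R] {n : ℕ} (A : Matrix (Fin (2*(n+1))) (Fin (2*(n+1))) R) :
    pf A = ∑ j : Fin (2*n+1), (-1) ^ (j : ℕ) * A (0 : Fin (2*n+1+1)) (j.succ : Fin (2*n+1+1)) *
      pf (Matrix.of fun u v : Fin (2*n) =>
        A ((j.succAbove u).succ : Fin (2*n+1+1)) ((j.succAbove v).succ : Fin (2*n+1+1))) := by
  unfold pf
  simp only [Finset.mul_sum]
  rw [← Finset.sum_product']
  symm
  refine Finset.sum_bij (fun p _ => pfExt p.1 p.2) ?_ ?_ ?_ ?_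
  · rintro ⟨j, τ⟩ h
    rw [pfExt_mem]
    exact (Finset.mem_product.1 h).2
  · rintro ⟨j, τ⟩ _ ⟨j', τ'⟩ _ h
    obtain ⟨rfl, rfl⟩ := pfExt_inj h
    rfl
  · intro σ hσ
    obtain ⟨j, τ, rfl⟩ := pfExt_surj σ (pfMatchings_zero σ hσ)
    exact ⟨(j, τ), Finset.mem_product.2 ⟨mem_univ _, (pfExt_mem j τ).1 hσ⟩, rfl⟩
  · rintro ⟨j, τ⟩ _
    dsimp only
    rw [pfExt_sign, Fin.prod_univ_succ]
    have e0 : ∀ i : Fin n, ∀ h, pfExt j τ ⟨2 * (i.succ).1, h⟩ =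
        ((j.succAbove (τ ⟨2*i.1, by omega⟩)).succ : Fin (2*n+1+1)) := fun i h =>
      pfExt_succ j τ ⟨2*i.1, by omega⟩ h
    have e1 : ∀ i : Fin n, ∀ h, pfExt j τ ⟨2 * (i.succ).1+1, h⟩ =
        ((j.succAbove (τ ⟨2*i.1+1, by omega⟩)).succ : Fin (2*n+1+1)) := fun i h =>
      pfExt_succ j τ ⟨2*i.1+1, by omega⟩ h
    have z0 : pfExt j τ ⟨2 * (0 : Fin (n+1)).1, by simp⟩ = (0 : Fin (2*n+1+1)) := pfExt_zero j τ _
    have z1 : pfExt j τ ⟨2 * (0 : Fin (n+1)).1 + 1, by simp; omega⟩ = (j.succ : Fin (2*n+1+1)) := pfExt_one j τ _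
    simp only [e0, e1, z0, z1, Matrix.of_apply]
    push_cast
    ring

def rowMap {n : ℕ} (m : Fin (2*n+1)) : Fin (2*n) ⊕ Fin 2 → Fin (2*(n+1)) :=
  Sum.elim (fun k => ((m.succAbove k).succ : Fin (2*n+1+1)))
    ![(0 : Fin (2*n+1+1)), (m.succ : Fin (2*n+1+1))]

def colMap (n : ℕ) : Fin (2*n) ⊕ Fin 2 → Fin (2*(n+1)) :=
  Sum.elim (fun j => if j.1 < n then ⟨j.1, by omega⟩ else ⟨j.1 + 1, by omega⟩)
    ![⟨n, by omega⟩, ⟨2*n+1, by omega⟩]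

lemma rowMap_bij {n : ℕ} (m : Fin (2*n+1)) : Function.Bijective (rowMap m) := by
  rw [Fintype.bijective_iff_injective_and_card]
  refine ⟨?_, by simp; omega⟩
  have h1 : ∀ k : Fin (2*n), ((m.succAbove k).succ : Fin (2*n+1+1)) ≠ 0 :=
    fun k => Fin.succ_ne_zero _
  have h2 : ∀ k : Fin (2*n), ((m.succAbove k).succ : Fin (2*n+1+1)) ≠ m.succ := fun k h =>
    Fin.succAbove_ne m k (Fin.succ_injective _ h)
  have h3 : (m.succ : Fin (2*n+1+1)) ≠ 0 := Fin.succ_ne_zero _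
  rintro (i | i) (j | j) h
  · exact congrArg _ (Fin.succAbove_right_injective (Fin.succ_injective _ h))
  · fin_cases j
    · exact absurd h (h1 i)
    · exact absurd h (h2 i)
  · fin_cases i
    · exact absurd h.symm (h1 j)
    · exact absurd h.symm (h2 j)
  · fin_cases i <;> fin_cases j
    · rfl
    · exact absurd h.symm h3
    · exact absurd h h3
    · rfl

lemma colMap_bij (n : ℕ) : Function.Bijective (colMap n) := by
  rw [Fintype.bijective_iff_injective_and_card]
  refine ⟨?_, by simp; omega⟩
  have key : ∀ i : Fin (2*n), (colMap n (Sum.inl i)).1 = if i.1 < n then i.1 else i.1 + 1 := by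
    intro i
    simp only [colMap, Sum.elim_inl]
    split_ifs <;> rfl
  have k0 : (colMap n (Sum.inr 0)).1 = n := rfl
  have k1 : (colMap n (Sum.inr 1)).1 = 2*n+1 := rfl
  rintro (i | i) (j | j) h
  · have h := congrArg Fin.val h
    rw [key, key] at h
    congr 1
    ext
    split_ifs at h <;> omega
  · exfalso
    have h := congrArg Fin.val h
    rw [key] at h
    fin_cases j <;> simp only [Fin.zero_eta, Fin.mk_one, k0, k1] at h <;> split_ifs at h <;> omega
  · exfalso
    have h := congrArg Fin.val h
    rw [key] at h
    fin_cases i <;> simp only [Fin.zero_eta, Fin.mk_one, k0, k1] at h <;> split_ifs at h <;> omega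
  · have h := congrArg Fin.val h
    fin_cases i <;> fin_cases j <;> simp only [Fin.zero_eta, Fin.mk_one, k0, k1] at h ⊢ <;> omega

noncomputable def rowEquiv {n : ℕ} (m : Fin (2*n+1)) : Fin (2*n) ⊕ Fin 2 ≃ Fin (2*(n+1)) :=
  Equiv.ofBijective _ (rowMap_bij m)

noncomputable def colEquiv (n : ℕ) : Fin (2*n) ⊕ Fin 2 ≃ Fin (2*(n+1)) :=
  Equiv.ofBijective _ (colMap_bij n)

noncomputable def rcSign {n : ℕ} (m : Fin (2*n+1)) : ℤˣ :=
  Equiv.Perm.sign ((rowEquiv m).trans (colEquiv n).symm)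

lemma det_rc {R : Type*} [CommRing R] {n : ℕ} (m : Fin (2*n+1))
    (M : Matrix (Fin (2*(n+1))) (Fin (2*(n+1))) R) :
    (M.submatrix (rowEquiv m) (colEquiv n)).det = ((rcSign m : ℤ) : R) * M.det := by
  rw [← Matrix.det_submatrix_equiv_self (colEquiv n) M, rcSign, ← Matrix.det_permute]
  congr 1
  ext i j
  simp

def colOp {R : Type*} [CommRing R] (n : ℕ) (u v : R) :
    Matrix (Fin (2*(n+1))) (Fin (2*(n+1))) R :=
  Matrix.of fun k j =>
    if j.1 = n ∨ j.1 = 2*n+1 then (if k = j then 1 else 0)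
    else (if k = j then v else if k.1 = j.1 + 1 then -u else 0)

lemma colOp_det {R : Type*} [CommRing R] (n : ℕ) (u v : R) :
    (colOp n u v).det = v ^ (2*n) := by
  rw [Matrix.det_of_isLowerTriangular]
  · rw [← Equiv.prod_comp (colEquiv n), Fintype.prod_sum_type, Fin.prod_univ_two]
    have k0 : (colEquiv n (Sum.inr 0)).1 = n := rfl
    have k1 : (colEquiv n (Sum.inr 1)).1 = 2*n+1 := rfl
    have key : ∀ i : Fin (2*n), (colEquiv n (Sum.inl i)).1 = if i.1 < n then i.1 else i.1 + 1 := by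
      intro i
      simp only [colEquiv, Equiv.ofBijective_apply, colMap, Sum.elim_inl]
      split_ifs <;> rfl
    have h : ∀ i : Fin (2*n), colOp n u v (colEquiv n (Sum.inl i)) (colEquiv n (Sum.inl i)) = v := by
      intro i
      have : ¬ ((colEquiv n (Sum.inl i)).1 = n ∨ (colEquiv n (Sum.inl i)).1 = 2*n+1) := by
        rw [key]; split_ifs <;> omega
      simp only [colOp, Matrix.of_apply, if_neg this, if_true]
    rw [Finset.prod_congr rfl fun i _ => h i]
    simp [colOp, k0, k1]
  · intro i j hij
    have hij : i.1 < j.1 := hij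
    have : i ≠ j := by rintro rfl; omega
    have h2 : ¬ i.1 = j.1 + 1 := by omega
    simp [colOp, this, h2]

lemma mul_colOp {R : Type*} [CommRing R] (n : ℕ) (u v : R)
    (M : Matrix (Fin (2*(n+1))) (Fin (2*(n+1))) R) (i j : Fin (2*(n+1)))
    (hj : j.1 = n ∨ j.1 = 2*n+1) : (M * colOp n u v) i j = M i j := by
  simp [Matrix.mul_apply, colOp, hj]

lemma mul_colOp' {R : Type*} [CommRing R] (n : ℕ) (u v : R)
    (M : Matrix (Fin (2*(n+1))) (Fin (2*(n+1))) R) (i j k : Fin (2*(n+1)))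
    (hj : ¬ (j.1 = n ∨ j.1 = 2*n+1)) (hk : k.1 = j.1 + 1) :
    (M * colOp n u v) i j = M i j * v - M i k * u := by
  have hne : k ≠ j := by rintro rfl; omega
  have : ∀ l, M i l * colOp n u v l j = (if l = j then M i j * v else 0) - (if l = k then M i k * u else 0) := by
    intro l
    simp only [colOp, Matrix.of_apply, if_neg hj]
    by_cases h1 : l = j
    · subst h1; simp [Ne.symm hne]
    · by_cases h2 : l = k
      · subst h2; simp [h1, hk]
      · have : ¬ l.1 = j.1 + 1 := fun h => h2 (Fin.ext (by omega))
        simp [h1, h2, this]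
  rw [Matrix.mul_apply, Finset.sum_congr rfl (fun l _ => this l), Finset.sum_sub_distrib]
  simp

lemma Vdet_collapse_aux {R : Type*} [CommRing R] {n : ℕ} (m : Fin (2*n+1))
    (x y a b : Fin (2*n+1+1) → R) (hx : x 0 = x m.succ) (hy : y 0 = y m.succ) :
    ((rcSign m : ℤ) : R) * (Vdet (n+1) x y a b * y m.succ ^ (2*n)) =
      ((∏ k : Fin (2*n), (x (m.succAbove k).succ * y m.succ - x m.succ * y (m.succAbove k).succ)) *
      Vdet n (fun k => x (m.succAbove k).succ) (fun k => y (m.succAbove k).succ)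
        (fun k => a (m.succAbove k).succ) (fun k => b (m.succAbove k).succ)) *
      (y m.succ ^ (2*n) * (a 0 * b m.succ - a m.succ * b 0)) := by
  have r0 : ∀ k : Fin (2*n), rowEquiv m (Sum.inl k) = ((m.succAbove k).succ : Fin (2*n+1+1)) :=
    fun k => rfl
  have r1 : rowEquiv m (Sum.inr 0) = (0 : Fin (2*n+1+1)) := rfl
  have r2 : rowEquiv m (Sum.inr 1) = (m.succ : Fin (2*n+1+1)) := rfl
  have k0 : (colEquiv n (Sum.inr 0)).1 = n := rfl
  have k1 : (colEquiv n (Sum.inr 1)).1 = 2*n+1 := rfl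
  have key : ∀ i : Fin (2*n), (colEquiv n (Sum.inl i)).1 = if i.1 < n then i.1 else i.1 + 1 := by
    intro i
    simp only [colEquiv, Equiv.ofBijective_apply, colMap, Sum.elim_inl]
    split_ifs <;> rfl
  unfold Vdet
  rw [← colOp_det n (x m.succ) (y m.succ), ← Matrix.det_mul, ← det_rc, ← Matrix.det_mul_column,
    colOp_det]
  set M : Matrix (Fin (2*(n+1))) (Fin (2*(n+1))) R := Matrix.of fun i j =>
    if (j : ℕ) < n+1 then a i * x i ^ (n + 1 - 1 - (j : ℕ)) * y i ^ (j : ℕ)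
    else b i * x i ^ (2 * (n+1) - 1 - (j : ℕ)) * y i ^ ((j : ℕ) - (n+1)) with hM
  have left : ∀ (i : Fin (2*n+1+1)) (j : Fin (2*n)),
      (M * colOp n (x m.succ) (y m.succ)) i (colEquiv n (Sum.inl j)) =
      (x i * y m.succ - x m.succ * y i) *
      (if (j : ℕ) < n then a i * x i ^ (n - 1 - (j : ℕ)) * y i ^ (j : ℕ)
      else b i * x i ^ (2 * n - 1 - (j : ℕ)) * y i ^ ((j : ℕ) - n)) := by
    intro i j
    have hc : ¬ ((colEquiv n (Sum.inl j)).1 = n ∨ (colEquiv n (Sum.inl j)).1 = 2*n+1) := by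
      rw [key]; split_ifs <;> omega
    rw [mul_colOp' n _ _ M i _ ⟨(colEquiv n (Sum.inl j)).1 + 1, by omega⟩ hc rfl]
    simp only [hM, Matrix.of_apply, key]
    by_cases hj : j.1 < n
    · obtain ⟨q, hq⟩ : ∃ q, n = j.1 + 1 + q := ⟨n - (j.1+1), by omega⟩
      have e1 : n + 1 - 1 - j.1 = q + 1 := by omega
      have e2 : n + 1 - 1 - (j.1 + 1) = q := by omega
      have e3 : n - 1 - j.1 = q := by omega
      have e4 : j.1 < n + 1 := by omega
      have e5 : j.1 + 1 < n + 1 := by omega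
      simp only [if_pos hj, if_pos e4, if_pos e5, e1, e2, e3]
      ring
    · obtain ⟨q, hq⟩ : ∃ q, 2 * n = j.1 + 1 + q := ⟨2 * n - (j.1+1), by omega⟩
      obtain ⟨p, hp⟩ : ∃ p, j.1 = n + p := ⟨j.1 - n, by omega⟩
      have e1 : 2 * (n + 1) - 1 - (j.1 + 1) = q + 1 := by omega
      have e2 : 2 * (n + 1) - 1 - (j.1 + 1 + 1) = q := by omega
      have e3 : 2 * n - 1 - j.1 = q := by omega
      have e4 : ¬ j.1 + 1 < n + 1 := by omega
      have e5 : ¬ j.1 + 1 + 1 < n + 1 := by omega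
      have e6 : j.1 + 1 - (n + 1) = p := by omega
      have e7 : j.1 + 1 + 1 - (n + 1) = p + 1 := by omega
      have e8 : j.1 - n = p := by omega
      simp only [if_neg hj, if_neg e4, if_neg e5, e1, e2, e3, e6, e7, e8]
      ring
  have right0 : ∀ (i : Fin (2*n+1+1)),
      (M * colOp n (x m.succ) (y m.succ)) i (colEquiv n (Sum.inr 0)) = a i * y i ^ n := by
    intro i
    rw [mul_colOp n _ _ M i _ (Or.inl k0)]
    simp [hM, k0]
  have right1 : ∀ (i : Fin (2*n+1+1)),
      (M * colOp n (x m.succ) (y m.succ)) i (colEquiv n (Sum.inr 1)) = b i * y i ^ n := by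
    intro i
    rw [mul_colOp n _ _ M i _ (Or.inr k1)]
    have e1 : ¬ 2 * n + 1 < n + 1 := by omega
    have e2 : 2 * (n + 1) - 1 - (2 * n + 1) = 0 := by omega
    have e3 : 2 * n + 1 - (n + 1) = n := by omega
    simp only [hM, k1, Matrix.of_apply, if_neg e1, e2, e3, pow_zero, mul_one]
  rw [← Matrix.fromBlocks_toBlocks ((M * colOp n (x m.succ) (y m.succ)).submatrix (rowEquiv m) (colEquiv n))]
  have hz : ((M * colOp n (x m.succ) (y m.succ)).submatrix (rowEquiv m) (colEquiv n)).toBlocks₂₁ = 0 := by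
    ext i j
    simp only [Matrix.toBlocks₂₁, Matrix.of_apply, Matrix.submatrix_apply, Matrix.zero_apply]
    fin_cases i
    · refine (left 0 j).trans ?_
      rw [hx, hy]; ring
    · refine (left m.succ j).trans ?_
      ring
  rw [hz, Matrix.det_fromBlocks_zero₂₁]
  congr 1
  · congr 1
    ext i j
    exact left _ j
  · rw [Matrix.det_fin_two]
    simp only [Matrix.toBlocks₂₂, Matrix.of_apply, Matrix.submatrix_apply, r1, r2, right0, right1]
    rw [hy]; ring

lemma Vdet_map {R S : Type*} [CommRing R] [CommRing S] (φ : R →+* S) (n : ℕ)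
    (x y a b : Fin (2*n) → R) :
    φ (Vdet n x y a b) = Vdet n (fun i => φ (x i)) (fun i => φ (y i)) (fun i => φ (a i))
      (fun i => φ (b i)) := by
  unfold Vdet
  rw [RingHom.map_det]
  congr 1
  ext i j
  simp only [RingHom.mapMatrix_apply, Matrix.map_apply, Matrix.of_apply]
  split_ifs <;> simp

lemma Vdet_collapse {F : Type*} [Field F] {n : ℕ} (m : Fin (2*n+1))
    (x y a b : Fin (2*n+1+1) → F) (hx : x 0 = x m.succ) (hy : y 0 = y m.succ) :
    ((rcSign m : ℤ) : F) * Vdet (n+1) x y a b =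
      ((∏ k : Fin (2*n), (x (m.succAbove k).succ * y m.succ - x m.succ * y (m.succAbove k).succ)) *
      Vdet n (fun k => x (m.succAbove k).succ) (fun k => y (m.succAbove k).succ)
        (fun k => a (m.succAbove k).succ) (fun k => b (m.succAbove k).succ)) *
      (a 0 * b m.succ - a m.succ * b 0) := by
  have h := Vdet_collapse_aux (R := Polynomial F) m (fun i => Polynomial.C (x i))
    (fun i => Polynomial.X + Polynomial.C (y i)) (fun i => Polynomial.C (a i))
    (fun i => Polynomial.C (b i)) (by simp only [hx]) (by simp only [hy])
  have hne : (Polynomial.X + Polynomial.C (y m.succ)) ^ (2*n) ≠ 0 :=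
    pow_ne_zero _ (Polynomial.X_add_C_ne_zero _)
  rw [← mul_assoc, mul_left_comm _ (_ ^ (2*n)) _, mul_comm] at h
  have h := mul_left_cancel₀ hne h
  have h := congrArg (Polynomial.evalRingHom (0 : F)) h
  simp only [map_mul, Vdet_map, map_prod, map_sub, map_intCast] at h
  simpa using h

def FormS (F : Type*) [Field F] (d : ℕ) : Submodule F (F × F → F) :=
  Submodule.span F (Set.range fun k : Fin (d+1) => fun p : F × F => p.1 ^ k.1 * p.2 ^ (d - k.1))

lemma FormS_mono {F : Type*} [Field F] (k l d : ℕ) (h : k + l = d) :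
    (fun p : F × F => p.1 ^ k * p.2 ^ l) ∈ FormS F d := by
  refine Submodule.subset_span ⟨⟨k, by omega⟩, ?_⟩
  have : d - k = l := by omega
  simp only [this]

lemma FormS_mul {F : Type*} [Field F] {d e : ℕ} {f g : F × F → F} (hf : f ∈ FormS F d)
    (hg : g ∈ FormS F e) : f * g ∈ FormS F (d + e) := by
  induction hf using Submodule.span_induction with
  | zero => rw [zero_mul]; exact Submodule.zero_mem _
  | add u v _ _ hu hv => rw [add_mul]; exact Submodule.add_mem _ hu hv
  | smul c u _ hu => rw [smul_mul_assoc]; exact Submodule.smul_mem _ _ hu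
  | mem u hu =>
    obtain ⟨k, rfl⟩ := hu
    induction hg using Submodule.span_induction with
    | zero => rw [mul_zero]; exact Submodule.zero_mem _
    | add u v _ _ hu hv => rw [mul_add]; exact Submodule.add_mem _ hu hv
    | smul c u _ hu => rw [mul_smul_comm]; exact Submodule.smul_mem _ _ hu
    | mem v hv =>
      obtain ⟨l, rfl⟩ := hv
      convert FormS_mono (F := F) (k.1 + l.1) ((d - k.1) + (e - l.1)) (d + e) (by omega) using 1
      ext p
      simp only [Pi.mul_apply]
      ring

lemma FormS_lin {F : Type*} [Field F] (u v : F) :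
    (fun p : F × F => p.1 * v - u * p.2) ∈ FormS F 1 := by
  have h1 := Submodule.smul_mem _ v (FormS_mono (F := F) 1 0 1 rfl)
  have h2 := Submodule.smul_mem _ u (FormS_mono (F := F) 0 1 1 rfl)
  convert Submodule.sub_mem _ h1 h2 using 1
  ext p
  simp [mul_comm]

lemma FormS_prod {F : Type*} [Field F] (d : ℕ) (u v : Fin d → F) :
    (fun p : F × F => ∏ k, (p.1 * v k - u k * p.2)) ∈ FormS F d := by
  induction d with
  | zero =>
    convert FormS_mono (F := F) 0 0 0 rfl using 1
    ext p; simp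
  | succ d ih =>
    convert FormS_mul (ih (fun k => u k.castSucc) (fun k => v k.castSucc))
      (FormS_lin (u (Fin.last d)) (v (Fin.last d))) using 1
    ext p
    simp [Fin.prod_univ_castSucc]

lemma FormS_eq_zero {F : Type*} [Field F] {d : ℕ} {f : F × F → F} (hf : f ∈ FormS F d)
    (u v : Fin (d+1) → F) (h : ∀ i j, i ≠ j → u i * v j - u j * v i ≠ 0)
    (h0 : ∀ i, f (u i, v i) = 0) (p : F × F) : f p = 0 := by
  obtain ⟨c, rfl⟩ := (Submodule.mem_span_range_iff_exists_fun _).1 hf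
  have hc : c = 0 := by
    refine Matrix.eq_zero_of_mulVec_eq_zero (M := Matrix.projVandermonde u v) ?_ ?_
    · rw [Matrix.det_projVandermonde]
      refine Finset.prod_ne_zero_iff.2 fun i _ => Finset.prod_ne_zero_iff.2 fun j hj => ?_
      exact h j i (Finset.mem_Ioi.1 hj).ne'
    · ext i
      rw [Pi.zero_apply, ← h0 i]
      simp only [Matrix.mulVec, dotProduct, Finset.sum_apply, Pi.smul_apply, smul_eq_mul]
      refine Finset.sum_congr rfl fun j _ => ?_
      rw [Matrix.projVandermonde_apply, Fin.val_rev, mul_comm, Nat.add_sub_add_right]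
  simp [hc]

lemma Vdet_form {F : Type*} [Field F] {n : ℕ} (x y : Fin (2*n+1) → F) (a b : Fin (2*n+1+1) → F) :
    (fun p : F × F => Vdet (n+1) (Fin.cons p.1 x : Fin (2*n+1+1) → F)
      (Fin.cons p.2 y : Fin (2*n+1+1) → F) a b) ∈ FormS F n := by
  have : (fun p : F × F => Vdet (n+1) (Fin.cons p.1 x : Fin (2*n+1+1) → F)
      (Fin.cons p.2 y : Fin (2*n+1+1) → F) a b) =
    ∑ j : Fin (2*n+1+1), ((-1) ^ (j : ℕ) *
      (Matrix.det (Matrix.of fun (i : Fin (2*n+1)) (k : Fin (2*n+1)) =>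
        if (j.succAbove k).1 < n + 1 then
          a i.succ * x i ^ (n + 1 - 1 - (j.succAbove k).1) * y i ^ (j.succAbove k).1
        else b i.succ * x i ^ (2 * (n+1) - 1 - (j.succAbove k).1) *
          y i ^ ((j.succAbove k).1 - (n + 1)))) * (if j.1 < n + 1 then a 0 else b 0)) •
      (fun p : F × F => if j.1 < n + 1 then p.1 ^ (n + 1 - 1 - j.1) * p.2 ^ j.1 else
        p.1 ^ (2 * (n+1) - 1 - j.1) * p.2 ^ (j.1 - (n + 1))) := by
    ext p
    refine (Matrix.det_succ_row_zero (n := 2*n+1) _).trans ?_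
    rw [Finset.sum_apply]
    refine Finset.sum_congr rfl fun j _ => ?_
    simp only [Pi.smul_apply, smul_eq_mul, Matrix.of_apply, Fin.cons_zero]
    refine (mul_right_comm _ _ _).trans ?_
    rw [mul_assoc (_ * _)]
    congr 1
    split_ifs <;> ring
  rw [this]
  refine Submodule.sum_mem _ fun j _ => Submodule.smul_mem _ _ ?_
  by_cases hj : j.1 < n + 1
  · simp only [if_pos hj]
    exact FormS_mono _ _ _ (by omega)
  · simp only [if_neg hj]
    exact FormS_mono _ _ _ (by omega)

lemma prod_split {R : Type*} [CommRing R] {N : ℕ} (w : Fin (N+1) → Fin (N+1) → R)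
    (hw : ∀ i j, w i j = - w j i) (j : Fin (N+1)) :
    ∏ i, ∏ k ∈ Ioi i, w i k = (-1) ^ (j : ℕ) * (∏ k, w j (j.succAbove k)) *
      ∏ i, ∏ k ∈ Ioi i, w (j.succAbove i) (j.succAbove k) := by
  have h := Equiv.Perm.prod_Ioi_comp_eq_sign_mul_prod j.cycleRange.symm hw
  rw [Fin.prod_univ_succ] at h
  simp only [Fin.prod_Ioi_succ, Fin.prod_Ioi_zero, Fin.cycleRange_symm_zero,
    Fin.cycleRange_symm_succ, Equiv.Perm.sign_symm, Fin.sign_cycleRange] at h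
  rw [mul_assoc, h, ← mul_assoc]
  push_cast
  rw [← mul_pow]
  simp

/-- The key interpolation identity. -/
lemma key_identity {F : Type*} [Field F] {n : ℕ} (x y : Fin (2*n+1) → F)
    (a b c d : Fin (2*n+1+1) → F)
    (hw : ∀ i j, i ≠ j → x i * y j - x j * y i ≠ 0) (p : F × F) :
    Vdet (n+1) (Fin.cons p.1 x : Fin (2*n+1+1) → F) (Fin.cons p.2 y : Fin (2*n+1+1) → F) a b *
    Vdet (n+1) (Fin.cons p.1 x : Fin (2*n+1+1) → F) (Fin.cons p.2 y : Fin (2*n+1+1) → F) c d =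
    ∑ j : Fin (2*n+1),
      (((a 0 * b j.succ - a j.succ * b 0) * (c 0 * d j.succ - c j.succ * d 0)) *
      (Vdet n (fun k => x (j.succAbove k)) (fun k => y (j.succAbove k))
        (fun k => a (j.succAbove k).succ) (fun k => b (j.succAbove k).succ) *
      Vdet n (fun k => x (j.succAbove k)) (fun k => y (j.succAbove k))
        (fun k => c (j.succAbove k).succ) (fun k => d (j.succAbove k).succ)) *
      ∏ k, (x j * y (j.succAbove k) - x (j.succAbove k) * y j)) *
      ∏ k, (p.1 * y (j.succAbove k) - x (j.succAbove k) * p.2) := by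
  rw [← sub_eq_zero]
  have hmem : ((fun p : F × F => Vdet (n+1) (Fin.cons p.1 x : Fin (2*n+1+1) → F)
      (Fin.cons p.2 y : Fin (2*n+1+1) → F) a b) *
      (fun p : F × F => Vdet (n+1) (Fin.cons p.1 x : Fin (2*n+1+1) → F)
      (Fin.cons p.2 y : Fin (2*n+1+1) → F) c d)) - ∑ j : Fin (2*n+1),
      (((a 0 * b j.succ - a j.succ * b 0) * (c 0 * d j.succ - c j.succ * d 0)) *
      (Vdet n (fun k => x (j.succAbove k)) (fun k => y (j.succAbove k))
        (fun k => a (j.succAbove k).succ) (fun k => b (j.succAbove k).succ) *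
      Vdet n (fun k => x (j.succAbove k)) (fun k => y (j.succAbove k))
        (fun k => c (j.succAbove k).succ) (fun k => d (j.succAbove k).succ)) *
      ∏ k, (x j * y (j.succAbove k) - x (j.succAbove k) * y j)) •
      (fun p : F × F => ∏ k, (p.1 * y (j.succAbove k) - x (j.succAbove k) * p.2)) ∈
      FormS F (2*n) := by
    refine Submodule.sub_mem _ ?_ (Submodule.sum_mem _ fun j _ => Submodule.smul_mem _ _ ?_)
    · have h := FormS_mul (Vdet_form x y a b) (Vdet_form x y c d)
      exact (congrArg (FormS F) (two_mul n)).symm ▸ h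
    · exact FormS_prod (2*n) (fun k => x (j.succAbove k)) (fun k => y (j.succAbove k))
  have := FormS_eq_zero hmem x y hw ?_ p
  · simpa only [Pi.sub_apply, Pi.mul_apply, Finset.sum_apply, Pi.smul_apply, smul_eq_mul] using this
  intro m
  simp only [Pi.sub_apply, Pi.mul_apply, Finset.sum_apply, Pi.smul_apply, smul_eq_mul]
  rw [sub_eq_zero, Finset.sum_eq_single m]
  · have h1 := Vdet_collapse m (Fin.cons (x m) x : Fin (2*n+1+1) → F)
      (Fin.cons (y m) y : Fin (2*n+1+1) → F) a b (by simp) (by simp)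
    have h2 := Vdet_collapse m (Fin.cons (x m) x : Fin (2*n+1+1) → F)
      (Fin.cons (y m) y : Fin (2*n+1+1) → F) c d (by simp) (by simp)
    simp only [Fin.cons_succ] at h1 h2
    have hs : ((rcSign m : ℤ) : F) * ((rcSign m : ℤ) : F) = 1 := by
      rw [← Int.cast_mul, ← Units.val_mul, Int.units_mul_self]
      simp
    have hp : (∏ k, (x (m.succAbove k) * y m - x m * y (m.succAbove k))) *
        (∏ k, (x (m.succAbove k) * y m - x m * y (m.succAbove k))) =
        (∏ k, (x m * y (m.succAbove k) - x (m.succAbove k) * y m)) *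
        (∏ k, (x m * y (m.succAbove k) - x (m.succAbove k) * y m)) := by
      rw [← Finset.prod_mul_distrib, ← Finset.prod_mul_distrib]
      exact Finset.prod_congr rfl fun k _ => by ring
    rw [← one_mul (Vdet (n+1) _ _ a b * _), ← hs, mul_mul_mul_comm, h1, h2,
      mul_assoc (_ * _) (∏ k, (x m * y (m.succAbove k) - x (m.succAbove k) * y m)), ← hp]
    ring
  · intro j _ hj
    obtain ⟨k, hk⟩ := Fin.exists_succAbove_eq hj.symm
    refine mul_eq_zero_of_right _ (Finset.prod_eq_zero (Finset.mem_univ k) ?_)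
    rw [hk]; ring
  · simp

theorem pf_general {F : Type*} [Field F] (n : ℕ) (x y a b c d : Fin (2*n) → F)
    (hw : ∀ i j, i ≠ j → x i * y j - x j * y i ≠ 0) :
    pf (Matrix.of fun i j : Fin (2 * n) =>
        (a i * b j - a j * b i) * (c i * d j - c j * d i) / (x i * y j - x j * y i)) =
      Vdet n x y a b * Vdet n x y c d /
        ∏ i : Fin (2 * n), ∏ j ∈ Ioi i, (x i * y j - x j * y i) := by
  induction n with
  | zero =>
    simp only [pf, Vdet, pfMatchings]
    simp
  | succ n ih =>
    change Fin (2*n+1+1) → F at x y a b c d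
    change ∀ i j : Fin (2*n+1+1), _ at hw
    rw [pf_succ]
    have hD : (∏ i : Fin (2 * (n+1)), ∏ j ∈ Ioi i, (x i * y j - x j * y i)) ≠ 0 :=
      Finset.prod_ne_zero_iff.2 fun i _ => Finset.prod_ne_zero_iff.2 fun j hj =>
        hw i j (Finset.mem_Ioi.1 hj).ne
    rw [eq_div_iff hD]
    have hk := key_identity (fun i : Fin (2*n+1) => x i.succ) (fun i => y i.succ) a b c d
      (fun i j hij => hw _ _ (fun h => hij (Fin.succ_injective _ h))) (x 0, y 0)
    have cx : (Fin.cons (x 0) (fun i : Fin (2*n+1) => x i.succ) : Fin (2*n+1+1) → F) = x :=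
      Fin.cons_self_tail x
    have cy : (Fin.cons (y 0) (fun i : Fin (2*n+1) => y i.succ) : Fin (2*n+1+1) → F) = y :=
      Fin.cons_self_tail y
    simp only [cx, cy] at hk
    rw [hk, Finset.sum_mul]
    refine Finset.sum_congr rfl fun j _ => ?_
    simp only [Matrix.of_apply]
    rw [ih (fun k => x (j.succAbove k).succ) (fun k => y (j.succAbove k).succ)
      (fun k => a (j.succAbove k).succ) (fun k => b (j.succAbove k).succ)
      (fun k => c (j.succAbove k).succ) (fun k => d (j.succAbove k).succ)
      (fun u v huv => hw _ _ (fun h => huv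
        (Fin.succAbove_right_injective (Fin.succ_injective _ h))))]
    have e1 : (∏ i : Fin (2 * (n+1)), ∏ j ∈ Ioi i, (x i * y j - x j * y i)) =
        (∏ k : Fin (2*n+1), (x 0 * y k.succ - x k.succ * y 0)) *
        ∏ i : Fin (2*n+1), ∏ k ∈ Ioi i, (x i.succ * y k.succ - x k.succ * y i.succ) := by
      refine (prod_split (N := 2*n+1) (fun i k => x i * y k - x k * y i)
        (fun i k => by ring) 0).trans ?_
      simp
    rw [e1, prod_split (fun i k : Fin (2*n+1) => x i.succ * y k.succ - x k.succ * y i.succ)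
      (fun i k => by ring) j, Fin.prod_univ_succAbove _ j]
    have n1 : x 0 * y j.succ - x j.succ * y 0 ≠ 0 := hw _ _ (Fin.succ_ne_zero j).symm
    have n2 : (∏ i : Fin (2*n), ∏ k ∈ Ioi i,
        (x (j.succAbove i).succ * y (j.succAbove k).succ -
          x (j.succAbove k).succ * y (j.succAbove i).succ)) ≠ 0 :=
      Finset.prod_ne_zero_iff.2 fun u _ => Finset.prod_ne_zero_iff.2 fun v hv =>
        hw _ _ (fun h => (Finset.mem_Ioi.1 hv).ne
          (Fin.succAbove_right_injective (Fin.succ_injective _ h)))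
    have hs : ((-1 : F) ^ (j : ℕ)) * (-1) ^ (j : ℕ) = 1 := by rw [← mul_pow]; simp
    generalize (∏ i : Fin (2*n), ∏ k ∈ Ioi i,
        (x (j.succAbove i).succ * y (j.succAbove k).succ -
          x (j.succAbove k).succ * y (j.succAbove i).succ)) = D at n2 ⊢
    generalize x 0 * y j.succ - x j.succ * y 0 = w at n1 ⊢
    generalize (-1 : F) ^ (j : ℕ) = s at hs ⊢
    generalize Vdet n (fun k => x (j.succAbove k).succ) (fun k => y (j.succAbove k).succ)
      (fun k => a (j.succAbove k).succ) (fun k => b (j.succAbove k).succ) = V1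
    generalize Vdet n (fun k => x (j.succAbove k).succ) (fun k => y (j.succAbove k).succ)
      (fun k => c (j.succAbove k).succ) (fun k => d (j.succAbove k).succ) = V2
    generalize ∏ k, (x j.succ * y (j.succAbove k).succ - x (j.succAbove k).succ * y j.succ) = P1
    generalize ∏ k, (x 0 * y (j.succAbove k).succ - x (j.succAbove k).succ * y 0) = P2
    generalize (a 0 * b j.succ - a j.succ * b 0) * (c 0 * d j.succ - c j.succ * d 0) = K
    have : s * (K / w) * (V1 * V2 / D) * (w * P2 * (s * P1 * D)) =
      (s * s) * (K * (V1 * V2) * P1 * P2) := by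
      field_simp
    refine this.trans ?_
    rw [hs]; ring

/-- Corollary `cor:pfaff-det`, first identity:
`Pf[ (a_i b_j − a_j b_i)(c_i d_j − c_j d_i)/((x_i − x_j)(1 − t x_i x_j)) ]
  = V^n(X,1+tX²;A,B) V^n(X,1+tX²;C,D) / Π_{i<j}(x_i − x_j)(1 − t x_i x_j)`. -/
theorem pf_eq_Vdet_t (F : Type*) [Field F] (n : ℕ) (hn : 1 ≤ n)
    (x a b c d : Fin (2 * n) → F) (t : F)
    (hx : Function.Injective x)
    (ht : ∀ i j : Fin (2 * n), i ≠ j → 1 - t * x i * x j ≠ 0) :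
    pf (Matrix.of fun i j : Fin (2 * n) =>
        (a i * b j - a j * b i) * (c i * d j - c j * d i) /
          ((x i - x j) * (1 - t * x i * x j))) =
      Vdet n x (fun i => 1 + t * x i ^ 2) a b * Vdet n x (fun i => 1 + t * x i ^ 2) c d /
        ∏ i : Fin (2 * n), ∏ j ∈ Ioi i, (x i - x j) * (1 - t * x i * x j) := by
  have e : ∀ i j, (x i - x j) * (1 - t * x i * x j) =
      x i * (1 + t * x j ^ 2) - x j * (1 + t * x i ^ 2) := fun i j => by ring
  simp only [e]
  refine pf_general n x (fun i => 1 + t * x i ^ 2) a b c d fun i j hij => ?_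
  rw [← e]
  exact mul_ne_zero (sub_ne_zero.2 fun h => hij (hx h)) (ht i j hij)
end

section
/- (Sundquist) Let n ≥ 1 and let x_1,...,x_{2n}, a_1,...,a_{2n} be variables. Then Pf[ (a_i − a_j)/(x_i + x_j) ]_{1≤i<j≤2n} = (−1)^{n(n−1)/2} a_{2δ_n, 2δ_n}(X; A) / Π_{1≤i<j≤2n}(x_i + x_j), where a_{α,β}(X;A) is the determinant of the 2n×2n matrix whose i-th row is (a_i x_i^{α_1}, ..., a_i x_i^{α_n}, x_i^{β_1}, ..., x_i^{β_n}), and 2δ_n = (2n−2, 2n−4, ..., 2, 0). -/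
open Finset

/-- `a_{α,β}(X;A)`: determinant of the `2n × 2n` matrix whose row `i` is
`(a_i x_i^{α_1}, …, a_i x_i^{α_n}, x_i^{β_1}, …, x_i^{β_n})` (0-indexed columns). -/
def altDet {R : Type*} [CommRing R] (n : ℕ) (α β : Fin n → ℕ)
    (x a : Fin (2 * n) → R) : R :=
  Matrix.det (Matrix.of fun i j : Fin (2 * n) =>
    if h : (j : ℕ) < n then a i * x i ^ α ⟨j, h⟩
    else x i ^ β ⟨(j : ℕ) - n, by have := j.2; omega⟩)


def PsiPerm {m : ℕ} (j : Fin (m + 1)) (τ : Equiv.Perm (Fin m)) : Equiv.Perm (Fin (m + 1)) :=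
  j.cycleRange.symm * Equiv.Perm.decomposeFin.symm (0, τ)

theorem PsiPerm_zero {m : ℕ} (j : Fin (m + 1)) (τ : Equiv.Perm (Fin m)) :
    PsiPerm j τ 0 = j := by
  simp [PsiPerm]

theorem PsiPerm_succ {m : ℕ} (j : Fin (m + 1)) (τ : Equiv.Perm (Fin m)) (k : Fin m) :
    PsiPerm j τ k.succ = j.succAbove (τ k) := by
  simp [PsiPerm]

theorem PsiPerm_sign {m : ℕ} (j : Fin (m + 1)) (τ : Equiv.Perm (Fin m)) :
    Equiv.Perm.sign (PsiPerm j τ) = (-1) ^ (j : ℕ) * Equiv.Perm.sign τ := by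
  simp [PsiPerm, Fin.sign_cycleRange]

theorem PsiPerm_bij (m : ℕ) : Function.Bijective
    (fun p : Fin (m + 1) × Equiv.Perm (Fin m) => PsiPerm p.1 p.2) := by
  rw [Fintype.bijective_iff_injective_and_card]
  constructor
  · rintro ⟨j, τ⟩ ⟨j', τ'⟩ h
    simp only at h
    have h0 : j = j' := by rw [← PsiPerm_zero j τ, h, PsiPerm_zero]
    subst h0
    have : τ = τ' := by
      ext k : 1
      have := PsiPerm_succ j τ k
      rw [h, PsiPerm_succ] at this
      exact (Fin.succAbove_right_injective this).symm
    rw [this]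
  · simp [Fintype.card_perm, Nat.factorial_succ]

theorem PsiPerm_sum {M : Type*} [AddCommMonoid M] (m : ℕ) (g : Equiv.Perm (Fin (m + 1)) → M) :
    ∑ σ, g σ = ∑ j, ∑ τ, g (PsiPerm j τ) := by
  rw [← (PsiPerm_bij m).sum_comp, Fintype.sum_prod_type]

theorem mem_match_iff (n : ℕ) (j : Fin (2 * n + 1)) (τ : Equiv.Perm (Fin (2 * n))) :
    PsiPerm (m := 2 * n + 1) 0 (PsiPerm j τ) ∈ pfMatchings (n + 1) ↔ τ ∈ pfMatchings n := by
  have h2 : ∀ (k : ℕ) (h : k < 2 * n), (PsiPerm (m := 2 * n + 1) 0 (PsiPerm j τ))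
      ⟨k + 2, by omega⟩ = (j.succAbove (τ ⟨k, h⟩)).succ := by
    intro k h
    have e : (⟨k + 2, by omega⟩ : Fin (2 * n + 1 + 1)) = Fin.succ (Fin.succ ⟨k, h⟩) := rfl
    rw [e, PsiPerm_succ, PsiPerm_succ]; simp
  have h0 : (PsiPerm (m := 2 * n + 1) 0 (PsiPerm j τ)) ⟨0, by omega⟩ = 0 := PsiPerm_zero _ _
  have h1 : (PsiPerm (m := 2 * n + 1) 0 (PsiPerm j τ)) ⟨1, by omega⟩ = j.succ := by
    have e : (⟨1, by omega⟩ : Fin (2 * n + 1 + 1)) = Fin.succ 0 := rfl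
    rw [e, PsiPerm_succ, PsiPerm_zero]; simp
  generalize hσ : PsiPerm (m := 2 * n + 1) 0 (PsiPerm j τ) = σ at *
  have hlt : ∀ u v : Fin (2 * n), (j.succAbove u).succ < (j.succAbove v).succ ↔ u < v := by
    intro u v; simp
  unfold pfMatchings
  rw [mem_filter, mem_filter]
  simp only [mem_univ, true_and]
  constructor
  · rintro ⟨ha, hb⟩
    constructor
    · intro i
      have := ha i.succ
      rw [← hlt, ← h2, ← h2]; exact this
    · intro i i' hii
      have := hb i.succ i'.succ (by simpa using hii)
      rw [← hlt, ← h2, ← h2]; exact this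
  · rintro ⟨ha, hb⟩
    constructor
    · intro i
      refine Fin.cases ?_ (fun i => ?_) i
      · exact (h0.trans_lt (Fin.succ_pos j)).trans_eq h1.symm
      · have := ha i
        rw [← hlt, ← h2, ← h2] at this; exact this
    · intro i i'
      refine Fin.cases ?_ (fun i => ?_) i <;> refine Fin.cases ?_ (fun i' => ?_) i' <;> intro hii
      · exact absurd hii (lt_irrefl _)
      · exact (h0.trans_lt (Fin.succ_pos _)).trans_eq (h2 (2 * i'.1) (by have := i'.2; omega)).symm
      · simp at hii
      · have := hb i i' (by simpa using hii)
        rw [← hlt, ← h2, ← h2] at this; exact this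

theorem match_zero (n : ℕ) (σ : Equiv.Perm (Fin (2 * n + 1 + 1)))
    (h : σ ∈ pfMatchings (n + 1)) : σ 0 = 0 := by
  unfold pfMatchings at h
  rw [mem_filter] at h
  obtain ⟨-, ha, hb⟩ := h
  obtain ⟨k, hk⟩ := σ.surjective 0
  have hle : ∀ i : Fin (n + 1), σ 0 ≤ σ ⟨2 * i.1, by have := i.2; omega⟩ := by
    intro i
    refine Fin.cases ?_ (fun i => ?_) i
    · exact le_refl _
    · exact (hb 0 i.succ (Fin.succ_pos i)).le
  have : σ 0 ≤ σ k := by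
    rcases Nat.even_or_odd' k.1 with ⟨c, hc | hc⟩
    · have := hle ⟨c, by have := k.2; omega⟩
      convert this using 2
      exact Fin.ext hc
    · have h1 := hle ⟨c, by have := k.2; omega⟩
      have h2 := ha ⟨c, by have := k.2; omega⟩
      have := h1.trans h2.le
      have e : k = ⟨2 * c + 1, by have := k.2; omega⟩ := Fin.ext hc
      rw [e]; exact this
  rw [hk] at this
  exact Fin.le_zero_iff.mp this

theorem pf_expand {R : Type*} [CommRing R] (n : ℕ)
    (A : Matrix (Fin (2 * (n + 1))) (Fin (2 * (n + 1))) R) :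
    pf A = ∑ j : Fin (2 * n + 1), (-1) ^ (j : ℕ) * A (0 : Fin (2 * n + 1 + 1)) j.succ *
      pf (A.submatrix (fun k : Fin (2 * n) => (j.succAbove k).succ)
        (fun k : Fin (2 * n) => (j.succAbove k).succ)) := by
  classical
  let g : Equiv.Perm (Fin (2 * n + 1 + 1)) → R := fun σ =>
    if σ ∈ pfMatchings (n + 1) then ((Equiv.Perm.sign σ : ℤ) : R) *
      ∏ i : Fin (n + 1), A (σ ⟨2 * i.1, by have := i.2; omega⟩)
        (σ ⟨2 * i.1 + 1, by have := i.2; omega⟩) else 0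
  have e1 : pf A = ∑ σ, g σ := by
    unfold pf
    have := Finset.sum_ite_mem univ (pfMatchings (n + 1))
      (fun σ : Equiv.Perm (Fin (2 * n + 1 + 1)) => ((Equiv.Perm.sign σ : ℤ) : R) *
      ∏ i : Fin (n + 1), A (σ ⟨2 * i.1, by have := i.2; omega⟩)
        (σ ⟨2 * i.1 + 1, by have := i.2; omega⟩))
    rw [Finset.univ_inter] at this
    exact this.symm
  rw [e1, PsiPerm_sum, Finset.sum_eq_single 0 _ (by simp)]
  · rw [PsiPerm_sum]
    refine Finset.sum_congr rfl fun j _ => ?_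
    unfold pf
    rw [← Finset.univ_inter (pfMatchings n), ← Finset.sum_ite_mem, Finset.mul_sum]
    refine Finset.sum_congr rfl fun τ _ => ?_
    simp only [g, mem_match_iff]
    split_ifs with h
    · rw [Fin.prod_univ_succ, PsiPerm_sign, PsiPerm_sign]
      have h2 : ∀ (k : ℕ) (h : k < 2 * n), (PsiPerm (m := 2 * n + 1) 0 (PsiPerm j τ))
          ⟨k + 2, by omega⟩ = (j.succAbove (τ ⟨k, h⟩)).succ := by
        intro k h
        have e : (⟨k + 2, by omega⟩ : Fin (2 * n + 1 + 1)) = Fin.succ (Fin.succ ⟨k, h⟩) := rfl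
        rw [e, PsiPerm_succ, PsiPerm_succ]; simp
      have h0 : (PsiPerm (m := 2 * n + 1) 0 (PsiPerm j τ)) ⟨0, by omega⟩ = 0 := PsiPerm_zero _ _
      have h1 : (PsiPerm (m := 2 * n + 1) 0 (PsiPerm j τ)) ⟨1, by omega⟩ = j.succ := by
        have e : (⟨1, by omega⟩ : Fin (2 * n + 1 + 1)) = Fin.succ 0 := rfl
        rw [e, PsiPerm_succ, PsiPerm_zero]; simp
      generalize PsiPerm (m := 2 * n + 1) 0 (PsiPerm j τ) = σ at *
      have e2 : A (σ ⟨2 * (0 : Fin (n + 1)).1, by simp⟩)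
          (σ ⟨2 * (0 : Fin (n + 1)).1 + 1, by simp⟩) = A (0 : Fin (2 * n + 1 + 1)) j.succ :=
        congrArg₂ A h0 h1
      have e3 : ∀ i : Fin n, A (σ ⟨2 * i.succ.1, by have := i.succ.2; omega⟩)
          (σ ⟨2 * i.succ.1 + 1, by have := i.succ.2; omega⟩) =
          A.submatrix (fun k : Fin (2 * n) => (j.succAbove k).succ)
            (fun k : Fin (2 * n) => (j.succAbove k).succ)
            (τ ⟨2 * i.1, by have := i.2; omega⟩) (τ ⟨2 * i.1 + 1, by have := i.2; omega⟩) := by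
        intro i
        exact congrArg₂ A (h2 (2 * i.1) (by have := i.2; omega))
          (h2 (2 * i.1 + 1) (by have := i.2; omega))
      rw [Finset.prod_congr rfl (fun i _ => e3 i)]
      refine (congrArg (fun z => _ * (z * _)) e2).trans ?_
      push_cast
      simp only [Fin.val_zero, pow_zero]
      ring
    · simp
  · intro i _ hi
    refine Finset.sum_eq_zero fun ρ _ => ?_
    simp only [g]
    rw [if_neg]
    intro h
    have := match_zero n _ h
    rw [PsiPerm_zero] at this
    exact hi this

def PP {R : Type*} [CommRing R] {m : ℕ} (x : Fin m → R) : R :=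
  ∏ i : Fin m, ∏ j ∈ Ioi i, (x i + x j)

theorem PP_succ {R : Type*} [CommRing R] {m : ℕ} (x : Fin (m + 1) → R) :
    PP x = (∏ k : Fin m, (x 0 + x k.succ)) * PP (fun k : Fin m => x k.succ) := by
  unfold PP
  rw [Fin.prod_univ_succ]
  simp [Fin.prod_Ioi_succ]

theorem PP_succAbove {R : Type*} [CommRing R] {m : ℕ} (x : Fin (m + 1) → R) (j : Fin (m + 1)) :
    PP x = (∏ k : Fin m, (x j + x (j.succAbove k))) * PP (fun k : Fin m => x (j.succAbove k)) := by
  induction m with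
  | zero =>
    have : j = 0 := Fin.ext (by omega)
    subst this
    rw [PP_succ]; simp
  | succ m ih =>
    refine Fin.cases ?_ (fun j => ?_) j
    · rw [PP_succ]; simp
    · rw [PP_succ, ih _ j, PP_succ (fun k => x (j.succ.succAbove k)),
        Fin.prod_univ_succAbove _ j, Fin.prod_univ_succ (n := m)]
      simp only [Fin.succ_succAbove_succ, Fin.succ_succAbove_zero]
      ring

/-- shorthand -/
def VV {R : Type*} [CommRing R] (n : ℕ) (x a : Fin (2 * n) → R) : R :=
  altDet n (fun j => 2 * (n - 1 - (j : ℕ))) (fun j => 2 * (n - 1 - (j : ℕ))) x a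

theorem VV_map {R S : Type*} [CommRing R] [CommRing S] (f : R →+* S) (n : ℕ)
    (x a : Fin (2 * n) → R) : f (VV n x a) = VV n (fun i => f (x i)) (fun i => f (a i)) := by
  unfold VV altDet
  rw [RingHom.map_det]
  congr 1
  ext i j
  simp only [RingHom.mapMatrix_apply, Matrix.map_apply, Matrix.of_apply]
  split_ifs <;> simp

/-- entry -/
def ent {R : Type*} [CommRing R] (n : ℕ) (x a : R) (j : ℕ) : R :=
  if j < n then a * (x ^ 2) ^ (n - 1 - j) else (x ^ 2) ^ (2 * n - 1 - j)

theorem VV_eq {R : Type*} [CommRing R] (n : ℕ) (x a : Fin (2 * n) → R) :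
    VV n x a = Matrix.det (Matrix.of fun i j : Fin (2 * n) => ent n (x i) (a i) j) := by
  unfold VV altDet ent
  congr 1
  ext i j
  simp only [Matrix.of_apply]
  split_ifs with h
  · rw [pow_mul]
  · rw [pow_mul]; congr 1; omega

/-- reduced entry for the column-reduced matrix -/
def entB {R : Type*} [CommRing R] (n : ℕ) (z x a : R) (j : ℕ) : R :=
  if j < n then a * (x ^ 2) ^ (n - 1 - j) * (x ^ 2 - z)
  else if j = n then a
  else if j < 2 * n + 1 then (x ^ 2) ^ (2 * n - j) * (x ^ 2 - z)
  else 1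

theorem VV_reduce {R : Type*} [CommRing R] (n : ℕ) (z : R) (x a : Fin (2 * n + 1 + 1) → R) :
    VV (n + 1) x a =
      Matrix.det (Matrix.of fun i j : Fin (2 * n + 1 + 1) => entB n z (x i) (a i) j) := by
  rw [VV_eq]
  change Matrix.det (Matrix.of fun i j : Fin (2 * n + 1 + 1) => ent (n + 1) (x i) (a i) j) = _
  rw [← Matrix.det_submatrix_equiv_self Fin.revPerm (Matrix.of fun i j => ent _ _ _ _),
    ← Matrix.det_submatrix_equiv_self Fin.revPerm (Matrix.of fun i j => entB _ _ _ _ _)]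
  apply Matrix.det_eq_of_forall_col_eq_smul_add_pred (fun j => if j.1 = n then 0 else z)
  · intro i
    simp only [Matrix.submatrix_apply, Matrix.of_apply, Fin.revPerm_apply, ent, entB, Fin.val_rev]
    simp
    grind
  · intro i j
    have hj := j.2
    simp only [Matrix.submatrix_apply, Matrix.of_apply, Fin.revPerm_apply, ent, entB, Fin.val_rev,
      Fin.val_succ, Fin.val_castSucc]
    generalize x i.rev ^ 2 = y
    generalize a i.rev = b
    generalize j.1 = k at *
    rcases lt_trichotomy k n with h | h | h
    · obtain ⟨e, rfl⟩ := Nat.exists_eq_add_of_lt h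
      have c1 : ¬ (2 * (k+e+1) + 1 + 1 - (k + 1 + 1) < k+e+1 + 1) := by omega
      have c2 : ¬ (2 * (k+e+1) + 1 + 1 - (k + 1 + 1) < k+e+1) := by omega
      have c3 : ¬ (2 * (k+e+1) + 1 + 1 - (k + 1 + 1) = k+e+1) := by omega
      have c4 : (2 * (k+e+1) + 1 + 1 - (k + 1 + 1) < 2 * (k+e+1) + 1) := by omega
      have c5 : ¬ (2 * (k+e+1) + 1 + 1 - (k + 1) < k+e+1 + 1) := by omega
      rw [if_neg c1, if_neg c2, if_neg c3, if_pos c4, if_neg c5, if_neg (by omega)]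
      have d1 : 2 * (k + e + 1 + 1) - 1 - (2 * (k + e + 1) + 1 + 1 - (k + 1 + 1)) = k + 1 := by omega
      have d2 : 2 * (k + e + 1) - (2 * (k + e + 1) + 1 + 1 - (k + 1 + 1)) = k := by omega
      have d3 : 2 * (k + e + 1 + 1) - 1 - (2 * (k + e + 1) + 1 + 1 - (k + 1)) = k := by omega
      rw [d1, d2, d3]; ring
    · subst h
      rw [if_pos (by omega), if_neg (by omega), if_pos (by omega), if_pos rfl]
      have d1 : k + 1 - 1 - (2 * k + 1 + 1 - (k + 1 + 1)) = 0 := by omega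
      rw [d1]; ring
    · rw [if_pos (by omega), if_pos (by omega), if_neg (by omega), if_pos (by omega)]
      obtain ⟨e, rfl⟩ := Nat.exists_eq_add_of_lt h
      have d1 : n + 1 - 1 - (2 * n + 1 + 1 - (n + e + 1 + 1 + 1)) = e + 1 := by omega
      have d2 : n - 1 - (2 * n + 1 + 1 - (n + e + 1 + 1 + 1)) = e := by omega
      have d3 : n + 1 - 1 - (2 * n + 1 + 1 - (n + e + 1 + 1)) = e := by omega
      rw [d1, d2, d3]; ring

theorem VV_key {R : Type*} [CommRing R] (n : ℕ) (y b : Fin (2 * n + 1) → R) (t c : R)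
    (m : Fin (2 * n + 1)) (ht : t ^ 2 = y m ^ 2) :
    VV (n + 1) (Fin.cons t y : Fin (2 * n + 1 + 1) → R) (Fin.cons c b : Fin (2 * n + 1 + 1) → R) =
      (-1) ^ n * ((-1) ^ (m : ℕ) * ((c - b m) *
        ((∏ k : Fin (2 * n), (y (m.succAbove k) ^ 2 - y m ^ 2)) *
          VV n (fun k => y (m.succAbove k)) (fun k => b (m.succAbove k))))) := by
  rw [VV_reduce n (y m ^ 2), Matrix.det_succ_row_zero]
  set j0 : Fin (2 * n + 1 + 1) := ⟨n, by omega⟩ with hj0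
  have hne : j0 ≠ Fin.last _ := by
    intro h; have := congrArg Fin.val h; simp [hj0] at this; omega
  have hz : ∀ j : Fin (2 * n + 1 + 1), j ≠ j0 → j ≠ Fin.last _ → ∀ (s : R) (w : R),
      s ^ 2 = y m ^ 2 → entB n (y m ^ 2) s w j = 0 := by
    intro j h1 h2 s w hs
    have h1' : j.1 ≠ n := fun h => h1 (Fin.ext h)
    have h2' : j.1 ≠ 2 * n + 1 := fun h => h2 (Fin.ext h)
    have := j.2
    unfold entB
    have h3 : j.1 < 2 * n + 1 := by omega
    simp only [if_neg h1', if_pos h3, hs, sub_self, mul_zero, ite_self]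
  have he0 : ∀ s w : R, entB n (y m ^ 2) s w n = w := by intro s w; simp [entB]
  have hel : ∀ s w : R, entB n (y m ^ 2) s w (2 * n + 1) = 1 := by
    intro s w; unfold entB
    rw [if_neg (by omega), if_neg (by omega), if_neg (by omega)]
  -- the common double minor
  have hminor : Matrix.det (Matrix.of fun i j : Fin (2 * n) =>
      entB n (y m ^ 2) (y (m.succAbove i)) (b (m.succAbove i))
        (if j.1 < n then j.1 else j.1 + 1)) =
      ((∏ k : Fin (2 * n), (y (m.succAbove k) ^ 2 - y m ^ 2)) *
          VV n (fun k => y (m.succAbove k)) (fun k => b (m.succAbove k))) := by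
    rw [VV_eq, ← Matrix.det_mul_column]
    congr 1
    ext i j
    have := j.2
    simp only [Matrix.of_apply, ent, entB]
    by_cases h : j.1 < n
    · simp only [if_pos h]; ring
    · simp only [if_neg h]
      rw [if_neg (by omega), if_neg (by omega), if_pos (by omega)]
      have : 2 * n - (j.1 + 1) = 2 * n - 1 - j.1 := by omega
      rw [this]; ring
  rw [← Finset.add_sum_erase _ _ (mem_univ j0), ← Finset.add_sum_erase _ _
    (show Fin.last (2 * n + 1) ∈ univ.erase j0 by simp [hne.symm]), Finset.sum_eq_zero]
  swap
  · intro j hj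
    simp only [mem_erase, mem_univ, and_true] at hj
    simp only [Matrix.of_apply, Fin.cons_zero]
    rw [hz j hj.2 hj.1 t c ht]; simp
  -- first minor: delete column n, expand row m
  have M1 : ((Matrix.of fun i j : Fin (2 * n + 1 + 1) => entB n (y m ^ 2)
      ((Fin.cons t y : Fin (2 * n + 1 + 1) → R) i) ((Fin.cons c b : Fin (2 * n + 1 + 1) → R) i) j).submatrix
        Fin.succ j0.succAbove).det = (-1) ^ (m : ℕ) *
      ((∏ k : Fin (2 * n), (y (m.succAbove k) ^ 2 - y m ^ 2)) *
          VV n (fun k => y (m.succAbove k)) (fun k => b (m.succAbove k))) := by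
    rw [Matrix.det_succ_row _ m, Finset.sum_eq_single (Fin.last _) _ (by simp), ← hminor]
    · have e1 : j0.succAbove (Fin.last (2 * n)) = Fin.last (2 * n + 1) := by
        rw [Fin.succAbove_of_le_castSucc]
        · simp
        · rw [Fin.le_def]; simp [hj0]; omega
      simp only [Matrix.submatrix_apply, Matrix.of_apply, Fin.cons_succ, e1, Fin.val_last, hel]
      rw [pow_add, pow_mul (-1 : R) 2 n]
      simp only [neg_one_sq, one_pow, mul_one]
      congr 2
      ext i j
      simp only [Matrix.submatrix_apply, Matrix.of_apply, Fin.cons_succ]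
      congr 1
      simp only [Fin.succAbove, hj0, Fin.lt_def]
      simp
      split_ifs <;> simp_all
    · intro j _ hj
      simp only [Matrix.submatrix_apply, Matrix.of_apply, Fin.cons_succ]
      rw [hz _ (Fin.succAbove_ne _ _) _ _ _ rfl]
      · simp
      · intro h
        apply hj
        have e1 : j0.succAbove (Fin.last (2 * n)) = Fin.last (2 * n + 1) := by
          rw [Fin.succAbove_of_le_castSucc]
          · simp
          · rw [Fin.le_def]; simp [hj0]; omega
        exact Fin.succAbove_right_injective (h.trans e1.symm)
  have M2 : ((Matrix.of fun i j : Fin (2 * n + 1 + 1) => entB n (y m ^ 2)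
      ((Fin.cons t y : Fin (2 * n + 1 + 1) → R) i) ((Fin.cons c b : Fin (2 * n + 1 + 1) → R) i) j).submatrix
        Fin.succ (Fin.last (2 * n + 1)).succAbove).det = (-1) ^ n * ((-1) ^ (m : ℕ) * (b m *
      ((∏ k : Fin (2 * n), (y (m.succAbove k) ^ 2 - y m ^ 2)) *
          VV n (fun k => y (m.succAbove k)) (fun k => b (m.succAbove k))))) := by
    rw [Matrix.det_succ_row _ m, Finset.sum_eq_single (⟨n, by omega⟩ : Fin (2 * n + 1)) _ (by simp),
      ← hminor]
    · simp only [Matrix.submatrix_apply, Matrix.of_apply, Fin.cons_succ, Fin.succAbove_last,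
        Fin.val_castSucc, he0]
      rw [pow_add, mul_comm ((-1 : R) ^ (m : ℕ)), mul_assoc, mul_assoc]
      congr 4
      ext i j
      simp only [Matrix.submatrix_apply, Matrix.of_apply, Fin.cons_succ]
      congr 1
      simp only [Fin.succAbove, Fin.lt_def]
      simp
      split_ifs <;> simp_all
    · intro j _ hj
      simp only [Matrix.submatrix_apply, Matrix.of_apply, Fin.cons_succ, Fin.succAbove_last]
      rw [hz _ _ (Fin.castSucc_lt_last j).ne _ _ rfl]
      · simp
      · intro h
        apply hj
        have := congrArg Fin.val h
        exact Fin.ext this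
  rw [M1, M2]
  simp only [Matrix.of_apply, Fin.cons_zero, Fin.val_last, hel]
  have : entB n (y m ^ 2) t c (j0 : ℕ) = c := he0 _ _
  rw [this, pow_succ (-1 : R), pow_mul (-1 : R) 2 n]
  have : (j0 : ℕ) = n := rfl
  rw [this]
  simp only [neg_one_sq, one_pow]
  ring

open Polynomial in
theorem rec_domain {R : Type*} [CommRing R] [IsDomain R] (n : ℕ) (y b : Fin (2 * n + 1) → R)
    (hy : Function.Injective y) (t c : R) :
    (-1) ^ n * VV (n + 1) (Fin.cons t y : Fin (2 * n + 1 + 1) → R)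
        (Fin.cons c b : Fin (2 * n + 1 + 1) → R) =
      ∑ j : Fin (2 * n + 1), (-1) ^ (j : ℕ) * ((c - b j) *
        ((∏ k : Fin (2 * n), (t + y (j.succAbove k))) *
         ((∏ k : Fin (2 * n), (y j + y (j.succAbove k))) *
          VV n (fun k => y (j.succAbove k)) (fun k => b (j.succAbove k))))) := by
  let Q : R[X] := ∑ j : Fin (2 * n + 1), C ((-1) ^ (j : ℕ) * ((c - b j) *
         ((∏ k : Fin (2 * n), (y j + y (j.succAbove k))) *
          VV n (fun k => y (j.succAbove k)) (fun k => b (j.succAbove k))))) *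
          ∏ k : Fin (2 * n), (X + C (y (j.succAbove k)))
  let P : R[X] := ∑ j : Fin (2 * n + 1 + 1), C ((-1) ^ n * ((-1) ^ (j : ℕ) *
      (if j.1 < n + 1 then c else 1) * Matrix.det
        ((Matrix.of fun i j : Fin (2 * n + 1 + 1) => ent (n + 1)
          ((Fin.cons t y : Fin (2 * n + 1 + 1) → R) i)
          ((Fin.cons c b : Fin (2 * n + 1 + 1) → R) i) j).submatrix Fin.succ j.succAbove))) *
      X ^ (2 * (if j.1 < n + 1 then n - j.1 else 2 * n + 1 - j.1))
  have hP : ∀ s : R, P.eval s = (-1) ^ n * VV (n + 1) (Fin.cons s y : Fin (2 * n + 1 + 1) → R)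
        (Fin.cons c b : Fin (2 * n + 1 + 1) → R) := by
    intro s
    rw [VV_eq]
    change _ = (-1) ^ n * Matrix.det (Matrix.of fun i j : Fin (2 * n + 1 + 1) => ent (n + 1)
          ((Fin.cons s y : Fin (2 * n + 1 + 1) → R) i)
          ((Fin.cons c b : Fin (2 * n + 1 + 1) → R) i) j)
    rw [Matrix.det_succ_row_zero]
    simp only [P, eval_finsetSum, Finset.mul_sum]
    refine Finset.sum_congr rfl fun j _ => ?_
    simp only [eval_mul, eval_C, eval_pow, eval_X, Matrix.of_apply, Fin.cons_zero]
    have h1 : ent (n + 1) s c j.1 = (if j.1 < n + 1 then c else 1) *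
        s ^ (2 * (if j.1 < n + 1 then n - j.1 else 2 * n + 1 - j.1)) := by
      unfold ent
      split_ifs
      · rw [pow_mul]; simp
      · rw [pow_mul, one_mul]; congr 1
    rw [h1]
    have h2 : ∀ s : R, ((Matrix.of fun i j : Fin (2 * n + 1 + 1) => ent (n + 1)
          ((Fin.cons s y : Fin (2 * n + 1 + 1) → R) i)
          ((Fin.cons c b : Fin (2 * n + 1 + 1) → R) i) j).submatrix Fin.succ j.succAbove) =
        Matrix.of fun i k => ent (n + 1) (y i) (b i) (j.succAbove k) := by
      intro s; ext i k
      simp only [Matrix.submatrix_apply, Matrix.of_apply, Fin.cons_succ]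
    rw [h2 t, h2 s]; ring
  have hQ : ∀ s : R, Q.eval s = ∑ j : Fin (2 * n + 1), (-1) ^ (j : ℕ) * ((c - b j) *
        ((∏ k : Fin (2 * n), (s + y (j.succAbove k))) *
         ((∏ k : Fin (2 * n), (y j + y (j.succAbove k))) *
          VV n (fun k => y (j.succAbove k)) (fun k => b (j.succAbove k))))) := by
    intro s
    simp only [Q, eval_finsetSum]
    refine Finset.sum_congr rfl fun j _ => ?_
    simp only [eval_mul, eval_C, eval_prod, eval_add, eval_X]
    ring
  have hPQ : P = Q := by
    refine Polynomial.eq_of_degrees_lt_of_eval_index_eq (s := Finset.univ)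
      (v := fun m => - y m) ?_ ?_ ?_ ?_
    · intro i _ j _ h
      exact hy (neg_injective h)
    · refine lt_of_le_of_lt (b := ((2 * n : ℕ) : WithBot ℕ)) ?_ (by
        rw [Finset.card_univ, Fintype.card_fin]; exact_mod_cast Nat.lt_succ_self _)
      refine (degree_sum_le _ _).trans (Finset.sup_le fun j _ => ?_)
      refine (degree_C_mul_X_pow_le _ _).trans ?_
      have := j.2
      norm_cast
      split_ifs <;> omega
    · refine lt_of_le_of_lt (b := ((2 * n : ℕ) : WithBot ℕ)) ?_ (by
        rw [Finset.card_univ, Fintype.card_fin]; exact_mod_cast Nat.lt_succ_self _)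
      refine (degree_sum_le _ _).trans (Finset.sup_le fun j _ => ?_)
      refine (degree_mul_le _ _).trans ?_
      rw [degree_prod]
      refine (add_le_add degree_C_le le_rfl).trans ?_
      simp
    · intro m _
      rw [hP, hQ, VV_key n y b _ c m (by ring), Finset.sum_eq_single m _ (by simp)]
      · have e : ∏ k : Fin (2 * n), (y (m.succAbove k) ^ 2 - y m ^ 2) =
          (∏ k : Fin (2 * n), (-y m + y (m.succAbove k))) *
          ∏ k : Fin (2 * n), (y m + y (m.succAbove k)) := by
          rw [← Finset.prod_mul_distrib]
          exact Finset.prod_congr rfl fun k _ => by ring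
        rw [e, ← mul_assoc, ← mul_pow]
        simp only [mul_neg, mul_one, neg_neg, one_pow, one_mul]
        ring
      · intro j _ hj
        obtain ⟨k, hk⟩ := Fin.exists_succAbove_eq hj.symm
        rw [Finset.prod_eq_zero (mem_univ k) (by rw [hk]; ring)]
        ring
  rw [← hP, ← hQ, hPQ]

theorem rec_ring {R : Type*} [CommRing R] (n : ℕ) (x a : Fin (2 * n + 1 + 1) → R) :
    (-1) ^ n * VV (n + 1) x a =
      ∑ j : Fin (2 * n + 1), (-1) ^ (j : ℕ) * ((a 0 - a j.succ) *
        ((∏ k : Fin (2 * n), (x 0 + x (j.succAbove k).succ)) *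
         ((∏ k : Fin (2 * n), (x j.succ + x (j.succAbove k).succ)) *
          VV n (fun k => x (j.succAbove k).succ) (fun k => a (j.succAbove k).succ)))) := by
  let ι := Fin (2 * n + 1 + 1) ⊕ Fin (2 * n + 1 + 1)
  have h := rec_domain (R := MvPolynomial ι ℤ) n (fun i => MvPolynomial.X (Sum.inl i.succ))
    (fun i => MvPolynomial.X (Sum.inr i.succ))
    (fun i j h => by
      have := MvPolynomial.X_injective h
      simpa [ι] using this)
    (MvPolynomial.X (Sum.inl 0)) (MvPolynomial.X (Sum.inr 0))
  let f : MvPolynomial ι ℤ →+* R := MvPolynomial.eval₂Hom (Int.castRingHom R) (Sum.elim x a)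
  have h' := congrArg f h
  have c1 : (fun i => f ((Fin.cons (MvPolynomial.X (Sum.inl 0))
      (fun i : Fin (2 * n + 1) => MvPolynomial.X (Sum.inl i.succ)) :
        Fin (2 * n + 1 + 1) → MvPolynomial ι ℤ) i)) = x := by
    ext i; refine Fin.cases ?_ (fun i => ?_) i <;> simp [f]
  have c2 : (fun i => f ((Fin.cons (MvPolynomial.X (Sum.inr 0))
      (fun i : Fin (2 * n + 1) => MvPolynomial.X (Sum.inr i.succ)) :
        Fin (2 * n + 1 + 1) → MvPolynomial ι ℤ) i)) = a := by
    ext i; refine Fin.cases ?_ (fun i => ?_) i <;> simp [f]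
  have e0 := VV_map f (n + 1) (Fin.cons (MvPolynomial.X (Sum.inl 0))
      (fun i : Fin (2 * n + 1) => MvPolynomial.X (Sum.inl i.succ)) :
        Fin (2 * n + 1 + 1) → MvPolynomial ι ℤ) (Fin.cons (MvPolynomial.X (Sum.inr 0))
      (fun i : Fin (2 * n + 1) => MvPolynomial.X (Sum.inr i.succ)) :
        Fin (2 * n + 1 + 1) → MvPolynomial ι ℤ)
  have e1 := e0.trans (congrArg₂ (VV (n + 1)) c1 c2)
  have fl : ∀ i, f (MvPolynomial.X (Sum.inl i)) = x i := by intro i; simp [f]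
  have fr : ∀ i, f (MvPolynomial.X (Sum.inr i)) = a i := by intro i; simp [f]
  rw [map_mul] at h'
  refine Eq.trans ?_ (h'.trans ?_)
  · refine congrArg₂ _ (by simp) e1.symm
  · simp only [map_sum, map_mul, map_pow, map_neg, map_one, map_sub, map_prod, map_add, VV_map,
      fl, fr]

theorem sundquist_main (F : Type*) [Field F] (n : ℕ) (x a : Fin (2 * n) → F)
    (hx : ∀ i j : Fin (2 * n), i ≠ j → x i + x j ≠ 0) :
    pf (Matrix.of fun i j : Fin (2 * n) => (a i - a j) / (x i + x j)) =
      (-1) ^ n.choose 2 * VV n x a / PP x := by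
  induction n with
  | zero =>
    have : pfMatchings 0 = {1} := by decide
    simp [pf, this, VV, altDet, PP]
  | succ n ih =>
    rw [pf_expand]
    change Fin (2 * n + 1 + 1) → F at x a
    have hc : (n + 1).choose 2 = n.choose 2 + n := by
      rw [Nat.choose_succ_succ' n 1, Nat.choose_one_right, add_comm]
    have hr := rec_ring n x a
    rw [hc, pow_add, mul_assoc]
    refine Eq.trans ?_ (congrArg (fun z => (-1) ^ n.choose 2 * z / PP x) hr).symm
    simp only [Finset.mul_sum, Finset.sum_div]
    refine Finset.sum_congr rfl fun j _ => ?_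
    have hi := ih (fun k => x (j.succAbove k).succ) (fun k => a (j.succAbove k).succ) (by
      intro k l hkl
      apply hx
      intro h
      exact hkl (Fin.succAbove_right_injective (Fin.succ_injective _ h)))
    refine (congrArg (fun z => _ * z) hi).trans ?_
    have hPP : PP x = (x 0 + x j.succ) * (∏ k : Fin (2 * n), (x 0 + x (j.succAbove k).succ)) *
        ((∏ k : Fin (2 * n), (x j.succ + x (j.succAbove k).succ)) *
          PP (fun k : Fin (2 * n) => x (j.succAbove k).succ)) := by
      rw [PP_succ (m := 2 * n + 1), PP_succAbove (fun k : Fin (2 * n + 1) => x k.succ) j,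
        Fin.prod_univ_succAbove _ j]
    have n1 : x 0 + x j.succ ≠ 0 := hx _ _ (Fin.succ_ne_zero j).symm
    have n2 : (∏ k : Fin (2 * n), (x 0 + x (j.succAbove k).succ)) ≠ 0 :=
      Finset.prod_ne_zero_iff.mpr fun k _ => hx _ _ (Fin.succ_ne_zero _).symm
    have n3 : (∏ k : Fin (2 * n), (x j.succ + x (j.succAbove k).succ)) ≠ 0 :=
      Finset.prod_ne_zero_iff.mpr fun k _ => hx _ _ (fun h =>
        (Fin.succAbove_ne j k) (Fin.succ_injective _ h).symm)
    have n4 : PP (fun k : Fin (2 * n) => x (j.succAbove k).succ) ≠ 0 := by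
      unfold PP
      refine Finset.prod_ne_zero_iff.mpr fun k _ => Finset.prod_ne_zero_iff.mpr fun l hl =>
        hx _ _ fun h => ?_
      have := Fin.succAbove_right_injective (Fin.succ_injective _ h)
      rw [mem_Ioi] at hl
      exact hl.ne this
    rw [hPP]
    simp only [Matrix.of_apply]
    generalize PP (fun k : Fin (2 * n) => x (j.succAbove k).succ) = p4 at *
    generalize (∏ k : Fin (2 * n), (x j.succ + x (j.succAbove k).succ)) = p3 at *
    generalize (∏ k : Fin (2 * n), (x 0 + x (j.succAbove k).succ)) = p2 at *
    field_simp

/-- Sundquist: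
`Pf[ (a_i − a_j)/(x_i + x_j) ] = (−1)^{n(n−1)/2} a_{2δ_n,2δ_n}(X;A) / Π_{i<j}(x_i + x_j)`,
where `2δ_n = (2n−2, 2n−4, …, 2, 0)`. -/
theorem sundquist_first (F : Type*) [Field F] (n : ℕ) (hn : 1 ≤ n)
    (x a : Fin (2 * n) → F)
    (hx : ∀ i j : Fin (2 * n), i ≠ j → x i + x j ≠ 0) :
    pf (Matrix.of fun i j : Fin (2 * n) => (a i - a j) / (x i + x j)) =
      (-1) ^ n.choose 2 *
        altDet n (fun j => 2 * (n - 1 - (j : ℕ))) (fun j => 2 * (n - 1 - (j : ℕ))) x a /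
        ∏ i : Fin (2 * n), ∏ j ∈ Ioi i, (x i + x j) := by
  exact sundquist_main F n x a hx
end
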